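/- There exists an absolute constant C > 0 such that for every n and every Boolean function f : {0,1}^n → {0,1} whose sensitivity s satisfies s ≥ 16, one has pdeg(OR_s) ≤ C · pdeg(f) · (log₂ log₂ s)². -/

import Mathlib

open scoped Classical

noncomputable def evalBool {ι : Type} (a : ι → Bool) (P : MvPolynomial ι ℝ) : ℝ :=
  MvPolynomial.eval (fun i => if a i then (1:ℝ) else 0) P

def HasProbPoly {ι : Type} (f : (ι → Bool) → Bool) (ε : ℝ) (d : ℕ) : Prop :=
  ∃ (k : ℕ) (w : Fin k → ℝ) (P : Fin k → MvPolynomial ι ℝ),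
    (∀ i, 0 ≤ w i) ∧ (∑ i, w i = 1) ∧ (∀ i, (P i).totalDegree ≤ d) ∧
    ∀ a : ι → Bool,
      ∑ i ∈ Finset.univ.filter
          (fun i => evalBool a (P i) ≠ (if f a then (1:ℝ) else 0)), w i ≤ ε

noncomputable def pdeg {ι : Type} (ε : ℝ) (f : (ι → Bool) → Bool) : ℕ :=
  sInf {d | HasProbPoly f ε d}

def TrulyVariate {ι : Type} (f : (ι → Bool) → Bool) : Prop :=
  ∀ i : ι, ∃ a, f (Function.update a i (!(a i))) ≠ f a

def ORf (n : ℕ) : (Fin n → Bool) → Bool := fun a => decide (∃ i, a i = true)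

noncomputable def sensitivity {n : ℕ} (f : (Fin n → Bool) → Bool) : ℕ :=
  Finset.univ.sup (fun a : Fin n → Bool =>
    (Finset.univ.filter (fun i : Fin n => f (Function.update a i (!(a i))) ≠ f a)).card)

/-!
Restricting `f` to the coordinates that are sensitive at a point `a` gives a function `g` of `s`
bits with `g(0) = 0` and `g(eⱼ) = 1` for every unit vector `eⱼ`. So `g` computes `OR_s` at every
input with at most one nonzero bit. To reach such an input, clear the bits outside a random set `T`:
if `T` contains each coordinate with probability `2^(-j-2)`, where `j = ⌊log₂ |x|⌋`, then exactly
one nonzero bit of `x` survives with probability at least `3/16`. As `|x|` is unknown, one takes a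
bounded number of random sets for each of the `O(log s)` values of `j`; then `OR_s(x)` is, with
probability close to `1`, the disjunction of the `O(log s)` bits `g(x|_T)`.

The same isolation trick with `g` replaced by the linear form `∑ i, x i` gives a probabilistic
polynomial of degree `O(log N)` for the disjunction of `N` bits. The disjunction of the `O(log s)`
bits above therefore costs a factor `O(log log s)` in the degree. The other factor `O(log log s)`
is the number of independent copies whose majority makes the error of each `g(x|_T)` small enough
for a union bound.
-/

open MeasureTheory ProbabilityTheory MvPolynomial
open scoped Finset unitInterval

lemma measureReal_prod_le_of_forall_section_le {α β : Type*} [MeasurableSpace α]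
    [MeasurableSpace β] {μ : Measure α} [IsProbabilityMeasure μ] {ν : Measure β}
    [IsProbabilityMeasure ν] {A : Set (α × β)} (hA : MeasurableSet A) {c : ℝ} (hc : 0 ≤ c)
    (h : ∀ x, ν.real (Prod.mk x ⁻¹' A) ≤ c) : (μ.prod ν).real A ≤ c := by
  refine ENNReal.toReal_le_of_le_ofReal hc ?_
  calc μ.prod ν A = ∫⁻ x, ν (Prod.mk x ⁻¹' A) ∂μ := Measure.prod_apply hA
    _ ≤ ∫⁻ _, ENNReal.ofReal c ∂μ := by
        gcongr with x
        exact (ENNReal.le_ofReal_iff_toReal_le (by finiteness) hc).2 (h x)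
    _ = ENNReal.ofReal c := by simp

lemma measureReal_pi_card_mem_ge_le {Ω ι : Type*} [MeasurableSpace Ω] [Fintype ι]
    (μ : Measure Ω) [IsProbabilityMeasure μ] {A : Set Ω}
    [DecidablePred (· ∈ A)] (hA : MeasurableSet A) {t : ℝ} (ht : μ.real A ≤ t) :
    (Measure.pi fun _ : ι ↦ μ).real {ω | Fintype.card ι * t ≤ (#{i | ω i ∈ A} : ℝ)} ≤
      Real.exp (-2 * Fintype.card ι * (t - μ.real A) ^ 2) := by
  set π := Measure.pi fun _ : ι ↦ μ
  have hmeas : Measurable (A.indicator (1 : Ω → ℝ)) := measurable_one.indicator hA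
  let X (i : ι) (ω : ι → Ω) : ℝ := A.indicator 1 (ω i) - μ.real A
  have hindep : iIndepFun X π :=
    iIndepFun_pi fun _ ↦ (hmeas.sub_const _).aemeasurable
  have hmean (i : ι) : π[fun ω ↦ A.indicator (1 : Ω → ℝ) (ω i)] = μ.real A := by
    rw [integral_comp_eval (μ := fun _ ↦ μ) hmeas.aestronglyMeasurable, integral_indicator_one hA]
  have hsubG (i : ι) : HasSubgaussianMGF (X i) ((‖(1 : ℝ) - 0‖₊ / 2) ^ 2) π := by
    rw [show X i = fun ω ↦ A.indicator 1 (ω i) - π[fun ω ↦ A.indicator (1 : Ω → ℝ) (ω i)] by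
      simp only [X, hmean]]
    refine hasSubgaussianMGF_of_mem_Icc (hmeas.comp (measurable_pi_apply i)).aemeasurable
      (.of_forall fun ω ↦ ?_)
    by_cases h : ω i ∈ A <;> simp [h]
  have hoeffding := HasSubgaussianMGF.measure_sum_ge_le_of_iIndepFun hindep
    (s := Finset.univ) (fun i _ ↦ hsubG i)
    (mul_nonneg (Nat.cast_nonneg (Fintype.card ι)) (sub_nonneg.2 ht))
  convert hoeffding using 2
  · ext ω
    simp [X, Finset.sum_sub_distrib, Set.indicator_apply, mul_sub]
  · obtain h | h := eq_or_ne (Fintype.card ι : ℝ) 0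
    · simp [h]
    · simp only [sub_zero, nnnorm_one, Finset.sum_const, Finset.card_univ, nsmul_eq_mul]
      push_cast
      field_simp

lemma measurable_inter_const {ι : Type*} (W : Set ι) : Measurable (· ∩ W : Set ι → Set ι) :=
  measurable_set_iff.2 fun i ↦ (measurable_set_mem i).and measurable_const

lemma setBernoulli_map_inter {ι : Type*} (u W : Set ι) (p : I) :
    setBer(u, p).map (· ∩ W) = setBer(u ∩ W, p) := by
  have hcoord (i : ι) : (unitInterval.toNNReal p • Measure.dirac (i ∈ u) +
        unitInterval.toNNReal (σ p) • Measure.dirac False).map (· ∧ i ∈ W) =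
      unitInterval.toNNReal p • Measure.dirac (i ∈ u ∩ W) +
        unitInterval.toNNReal (σ p) • Measure.dirac False := by
    have hand : Measurable (· ∧ i ∈ W) := by fun_prop
    simp [Measure.map_add, hand]
  simp only [setBernoulli_eq_map, ← hcoord]
  rw [← Measure.infinitePi_map_pi _ fun _ ↦ by fun_prop,
    Measure.map_map (measurable_inter_const W) (by fun_prop),
    Measure.map_map (by fun_prop) (by fun_prop)]
  rfl

lemma setBernoulli_real_ncard_inter_eq_one {ι : Type*} [Countable ι] {W : Set ι}
    (hW : W.Finite) (p : I) :
    setBer(Set.univ, p).real {T | (T ∩ W).ncard = 1} =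
      W.ncard * p * (1 - p : ℝ) ^ (W.ncard - 1) := by
  have hinter := measurable_inter_const W
  have hncard := map_ncard_setBernoulli_real_singleton hW p 1
  rw [← Set.univ_inter W, ← setBernoulli_map_inter, Set.univ_inter,
    Measure.map_map (by fun_prop) hinter,
    map_measureReal_apply (.comp (by fun_prop) hinter) (measurableSet_singleton 1)] at hncard
  simpa only [Nat.choose_one_right, pow_one] using! hncard

lemma setBernoulli_real_ncard_inter_ne_one_le {ι : Type*} [Finite ι] {W : Set ι} {p : I}
    (hp : W.ncard * (p : ℝ) ∈ Set.Icc (1 / 4 : ℝ) (1 / 2)) :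
    setBer(Set.univ, p).real {T | (T ∩ W).ncard ≠ 1} ≤ 13 / 16 := by
  obtain ⟨hlo, hhi⟩ := hp
  have hbernoulli : 1 - W.ncard * (p : ℝ) ≤ (1 - p : ℝ) ^ (W.ncard - 1) :=
    calc 1 - W.ncard * (p : ℝ) ≤ 1 + (W.ncard - 1 : ℕ) * (-p : ℝ) := by
          have : ((W.ncard - 1 : ℕ) : ℝ) * p ≤ W.ncard * p := by
            gcongr
            · exact p.2.1
            · exact Nat.sub_le ..
          linarith
      _ ≤ (1 + -p : ℝ) ^ (W.ncard - 1) := one_add_mul_le_pow (by linarith [p.2.2]) _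
      _ = (1 - p : ℝ) ^ (W.ncard - 1) := by rw [← sub_eq_add_neg]
  have hisolated : 3 / 16 ≤ setBer(Set.univ, p).real {T | (T ∩ W).ncard = 1} :=
    calc (3 / 16 : ℝ) ≤ W.ncard * p * (1 - W.ncard * p) := by nlinarith
      _ ≤ W.ncard * p * (1 - p : ℝ) ^ (W.ncard - 1) := by gcongr
      _ = _ := (setBernoulli_real_ncard_inter_eq_one W.toFinite p).symm
  have hcompl := probReal_compl_eq_one_sub (μ := setBer(Set.univ, p))
    (Set.toFinite {T : Set ι | (T ∩ W).ncard = 1}).measurableSet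
  rw [Set.compl_ofPred] at hcompl
  linarith

/-- The probability `2 ^ (-j - 2)`; sampling points with this probability leaves between `1 / 4` and
`1 / 2` expected points of a set whose cardinality is in `[2 ^ j, 2 ^ (j + 1))`. -/
noncomputable def dyadicDensity (j : ℕ) : I :=
  ⟨(1 / 2) ^ (j + 2), by positivity, pow_le_one₀ (by norm_num) (by norm_num)⟩

lemma mul_dyadicDensity_log_mem_Icc {m : ℕ} (hm : m ≠ 0) :
    m * (dyadicDensity (Nat.log 2 m) : ℝ) ∈ Set.Icc (1 / 4 : ℝ) (1 / 2) := by
  have hlo : (2 : ℝ) ^ Nat.log 2 m ≤ m := mod_cast Nat.pow_log_le_self 2 hm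
  have hhi : (m : ℝ) ≤ 2 ^ Nat.log 2 m * 2 :=
    mod_cast (Nat.lt_pow_succ_log_self Nat.one_lt_two m).le
  simp only [dyadicDensity, one_div, inv_pow, pow_add]
  constructor <;> field_simp <;> linarith

/-- Indices of the random sets used to isolate a point of an unknown nonempty set `W ⊆ α`: `r`
independent sets for each possible value of `⌊log₂ |W|⌋`. -/
abbrev DyadicIndex (α : Type*) [Fintype α] (r : ℕ) : Type :=
  Fin r × Fin (Nat.log 2 (Fintype.card α) + 1)

/-- The joint law of independent random subsets of `α` indexed by `DyadicIndex α r`, where the set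
with index `(i, j)` contains each point independently with probability `dyadicDensity j`. -/
noncomputable def dyadicMeasure (α : Type*) [Fintype α] (r : ℕ) :
    Measure (DyadicIndex α r → Set α) :=
  .pi fun q ↦ setBer(Set.univ, dyadicDensity q.2)

instance (α : Type*) [Fintype α] (r : ℕ) : IsProbabilityMeasure (dyadicMeasure α r) := by
  unfold dyadicMeasure
  infer_instance

lemma dyadicMeasure_real_forall_ncard_inter_ne_one_le {α : Type*} [Fintype α] (r : ℕ) {W : Set α}
    (hW : W.Nonempty) :
    (dyadicMeasure α r).real {T | ∀ q, (T q ∩ W).ncard ≠ 1} ≤ (13 / 16) ^ r := by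
  have hcard : W.ncard ≤ Fintype.card α := by
    simpa only [Nat.card_eq_fintype_card] using Set.ncard_le_card W
  let j : Fin (Nat.log 2 (Fintype.card α) + 1) :=
    ⟨Nat.log 2 W.ncard, Nat.lt_succ_of_le (Nat.log_mono_right hcard)⟩
  let s : Finset (DyadicIndex α r) := Finset.univ ×ˢ {j}
  have hs {q : DyadicIndex α r} (hq : q ∈ s) : q.2 = j := by
    simpa only [s, Finset.mem_product, Finset.mem_univ, true_and, Finset.mem_singleton] using hq
  calc (dyadicMeasure α r).real {T | ∀ q, (T q ∩ W).ncard ≠ 1}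
      ≤ (dyadicMeasure α r).real ((s : Set (DyadicIndex α r)).pi fun _ ↦
          {T | (T ∩ W).ncard ≠ 1}) := measureReal_mono fun T hT q _ ↦ hT q
    _ = ∏ q ∈ s, setBer(Set.univ, dyadicDensity q.2).real {T | (T ∩ W).ncard ≠ 1} := by
        simp only [dyadicMeasure, measureReal_def, Measure.pi_pi_finset, ENNReal.toReal_prod]
    _ ≤ ∏ q ∈ s, 13 / 16 := by
        gcongr with q hq
        rw [hs hq]
        exact setBernoulli_real_ncard_inter_ne_one_le
          (mul_dyadicDensity_log_mem_Icc hW.ncard_pos.ne')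
    _ = (13 / 16) ^ r := by
        rw [Finset.prod_const, Finset.card_product, Finset.card_singleton, Finset.card_fin, mul_one]

lemma totalDegree_bind₁_le {ι κ R : Type*} [CommSemiring R] {g : ι → MvPolynomial κ R}
    {n : ℕ} (hg : ∀ i, (g i).totalDegree ≤ n) (p : MvPolynomial ι R) :
    (bind₁ g p).totalDegree ≤ p.totalDegree * n := by
  rw [← aeval_eq_bind₁, aeval_def, eval₂_eq]
  refine totalDegree_finsetSum_le fun v hv ↦ ?_
  calc (algebraMap R (MvPolynomial κ R) (p.coeff v) * ∏ i ∈ v.support, g i ^ v i).totalDegree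
      ≤ (∏ i ∈ v.support, g i ^ v i).totalDegree := by
        refine (totalDegree_mul ..).trans ?_
        rw [algebraMap_eq, totalDegree_C, zero_add]
    _ ≤ ∑ i ∈ v.support, (g i ^ v i).totalDegree := totalDegree_finsetProd ..
    _ ≤ ∑ i ∈ v.support, v i * n := by
        gcongr with i
        exact (totalDegree_pow ..).trans (Nat.mul_le_mul_left _ (hg i))
    _ = v.degree * n := (Finset.sum_mul ..).symm
    _ ≤ p.totalDegree * n := Nat.mul_le_mul_right _ (le_totalDegree hv)

lemma evalBool_bind₁ {ι κ : Type} {x : κ → Bool} {y : ι → Bool} {g : ι → MvPolynomial κ ℝ}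
    (hg : ∀ i, evalBool x (g i) = if y i then 1 else 0) (p : MvPolynomial ι ℝ) :
    evalBool x (bind₁ g p) = evalBool y p := by
  simp only [evalBool] at hg ⊢
  simp only [← funext hg, ← coe_aeval_eq_eval, RingHom.coe_coe, aeval_bind₁]

lemma totalDegree_one_sub_le {ι R : Type*} [CommRing R] (p : MvPolynomial ι R) :
    (1 - p).totalDegree ≤ p.totalDegree :=
  (totalDegree_sub ..).trans (by rw [totalDegree_one, Nat.zero_max])

lemma exists_mem_of_card_lt_card_add_card_filter {ι : Type*} [Fintype ι] {S : Finset ι}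
    {q : ι → Prop} (h : Fintype.card ι < #S + #{i | q i}) : ∃ i ∈ S, q i := by
  obtain ⟨i, hi⟩ := Finset.inter_nonempty_of_card_lt_card_add_card S.subset_univ
    (Finset.subset_univ ({i | q i} : Finset ι)) (by rwa [Finset.card_univ])
  exact ⟨i, (Finset.mem_inter.1 hi).1, (Finset.mem_filter.1 (Finset.mem_inter.1 hi).2).2⟩

/-- The multilinear extension of the majority function, with ties broken in favour of `1`: the
probability that at least half of independent events of probabilities `p i` occur. -/
noncomputable def majority {ι R : Type*} [Fintype ι] [CommRing R] (p : ι → R) : R :=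
  ∑ S with Fintype.card ι ≤ 2 * #S, (∏ i ∈ S, p i) * ∏ i ∈ Sᶜ, (1 - p i)

section majority

variable {ι R S : Type*} [Fintype ι] [CommRing R] [CommRing S] {p : ι → R}

lemma majority_eq_zero (h : Fintype.card ι < 2 * #{i | p i = 0}) : majority p = 0 := by
  refine Finset.sum_eq_zero fun S hS ↦ ?_
  have hcard := (Finset.mem_filter.1 hS).2
  obtain ⟨i, hiS, hi⟩ :=
    exists_mem_of_card_lt_card_add_card_filter (S := S) (q := (p · = 0)) (by omega)
  rw [Finset.prod_eq_zero hiS hi, zero_mul]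

lemma majority_eq_one (h : Fintype.card ι < 2 * #{i | p i = 1}) : majority p = 1 := by
  have htotal : ∑ S, (∏ i ∈ S, p i) * ∏ i ∈ Sᶜ, (1 - p i) = 1 := by
    rw [← Fintype.prod_add]
    simp
  rw [← htotal, majority, ← Finset.sum_filter_add_sum_filter_not Finset.univ
    fun S : Finset ι ↦ Fintype.card ι ≤ 2 * #S, left_eq_add]
  refine Finset.sum_eq_zero fun S hS ↦ ?_
  have hcard := (Finset.mem_filter.1 hS).2
  obtain ⟨i, hiS, hi⟩ :=
    exists_mem_of_card_lt_card_add_card_filter (S := Sᶜ) (q := (p · = 1)) (by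
      rw [Finset.card_compl]
      omega)
  rw [Finset.prod_eq_zero hiS (sub_eq_zero.2 hi.symm), mul_zero]

lemma map_majority (φ : R →+* S) (p : ι → R) : φ (majority p) = majority fun i ↦ φ (p i) := by
  simp [majority]

lemma totalDegree_majority_le {κ : Type*} {p : ι → MvPolynomial κ R} {d : ℕ}
    (hp : ∀ i, (p i).totalDegree ≤ d) : (majority p).totalDegree ≤ Fintype.card ι * d := by
  refine totalDegree_finsetSum_le fun S _ ↦ ?_
  calc ((∏ i ∈ S, p i) * ∏ i ∈ Sᶜ, (1 - p i)).totalDegree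
      ≤ ∑ i ∈ S, (p i).totalDegree + ∑ i ∈ Sᶜ, (1 - p i).totalDegree :=
        (totalDegree_mul ..).trans (add_le_add (totalDegree_finsetProd ..)
          (totalDegree_finsetProd ..))
    _ ≤ ∑ _ ∈ S, d + ∑ _ ∈ Sᶜ, d := by
        gcongr
        · exact hp _
        · exact (totalDegree_one_sub_le _).trans (hp _)
    _ = Fintype.card ι * d := by
        rw [Finset.sum_add_sum_compl, Finset.sum_const, Finset.card_univ, smul_eq_mul]

end majority

section HasProbPoly

variable {ι : Type} {f : (ι → Bool) → Bool} {ε δ : ℝ} {d e : ℕ}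

lemma hasProbPoly_of_measure {Ω : Type} [Finite Ω] [MeasurableSpace Ω]
    [DiscreteMeasurableSpace Ω] (μ : Measure Ω) [IsProbabilityMeasure μ]
    (P : Ω → MvPolynomial ι ℝ) (hd : ∀ ω, (P ω).totalDegree ≤ d)
    (hP : ∀ a, μ.real {ω | evalBool a (P ω) ≠ if f a then 1 else 0} ≤ ε) : HasProbPoly f ε d := by
  have := Fintype.ofFinite Ω
  let e := (Fintype.equivFin Ω).symm
  refine ⟨_, fun i ↦ μ.real {e i}, fun i ↦ P (e i), fun _ ↦ measureReal_nonneg, ?_, fun _ ↦ hd _,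
    fun a ↦ ?_⟩
  · rw [e.sum_comp (fun ω ↦ μ.real {ω}), sum_measureReal_singleton, Finset.coe_univ, probReal_univ]
  · refine le_of_eq_of_le ?_ (hP a)
    rw [Finset.sum_filter,
      e.sum_comp fun ω ↦ if evalBool a (P ω) ≠ (if f a then 1 else 0) then μ.real {ω} else 0,
      ← Finset.sum_filter, sum_measureReal_singleton, Finset.coe_filter_univ]

namespace HasProbPoly

lemma exists_measure (h : HasProbPoly f ε d) :
    ∃ (k : ℕ) (μ : Measure (Fin k)) (P : Fin k → MvPolynomial ι ℝ),
      IsProbabilityMeasure μ ∧ (∀ i, (P i).totalDegree ≤ d) ∧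
      ∀ a, μ.real {i | evalBool a (P i) ≠ if f a then 1 else 0} ≤ ε := by
  obtain ⟨k, w, P, hw, hsum, hd, hP⟩ := h
  let p : PMF (Fin k) := .ofFintype (fun i ↦ ENNReal.ofReal (w i)) (by
    rw [← ENNReal.ofReal_sum_of_nonneg fun i _ ↦ hw i, hsum, ENNReal.ofReal_one])
  have hp (s : Finset (Fin k)) : p.toMeasure.real s = ∑ i ∈ s, w i := by
    rw [measureReal_def, PMF.toMeasure_apply_finset,
      ENNReal.toReal_sum fun i _ ↦ PMF.apply_ne_top p i]
    exact Finset.sum_congr rfl fun i _ ↦ ENNReal.toReal_ofReal (hw i)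
  refine ⟨k, p.toMeasure, P, inferInstance, hd, fun a ↦ ?_⟩
  rw [← Finset.coe_filter_univ, hp]
  exact hP a

lemma of_evalBool_eq (P : MvPolynomial ι ℝ) (hP : ∀ a, evalBool a P = if f a then 1 else 0) :
    HasProbPoly f 0 P.totalDegree :=
  hasProbPoly_of_measure (.dirac ()) (fun _ ↦ P) (fun _ ↦ le_rfl) fun a ↦ by simp [hP]

lemma mono (h : HasProbPoly f ε d) (hε : ε ≤ δ) (hd : d ≤ e) : HasProbPoly f δ e := by
  obtain ⟨k, w, P, hw, hsum, hP, herr⟩ := h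
  exact ⟨k, w, P, hw, hsum, fun i ↦ (hP i).trans hd, fun a ↦ (herr a).trans hε⟩

lemma apply_xor_const (i : ι) (c : Bool) : HasProbPoly (fun x ↦ x i ^^ c) 0 1 := by
  cases c
  · refine (of_evalBool_eq (X i) fun a ↦ ?_).mono le_rfl (totalDegree_X i).le
    simp [evalBool]
  · refine (of_evalBool_eq (1 - X i) fun a ↦ ?_).mono le_rfl
      ((totalDegree_one_sub_le _).trans (totalDegree_X i).le)
    cases h : a i <;> simp [evalBool, h]

lemma const (c : Bool) : HasProbPoly (fun _ : ι → Bool ↦ c) 0 0 :=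
  (of_evalBool_eq (C (if c then 1 else 0)) fun a ↦ by simp [evalBool]).mono le_rfl
    (totalDegree_C _).le

lemma nonneg (h : HasProbPoly f ε d) : 0 ≤ ε := by
  obtain ⟨k, w, P, hw, -, -, herr⟩ := h
  exact (Finset.sum_nonneg fun i _ ↦ hw i).trans (herr fun _ ↦ false)

lemma exists_zero_error [Finite ι] (f : (ι → Bool) → Bool) : ∃ d, HasProbPoly f 0 d := by
  have := Fintype.ofFinite ι
  let interp : MvPolynomial ι ℝ :=
    ∑ b : ι → Bool, C (if f b then 1 else 0) * ∏ i, if b i then X i else 1 - X i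
  refine ⟨interp.totalDegree, of_evalBool_eq interp fun a ↦ ?_⟩
  have hfactor (b : ι → Bool) (i : ι) :
      evalBool a (if b i then X i else 1 - X i) = if a i = b i then 1 else 0 := by
    cases ha : a i <;> cases hb : b i <;> simp [evalBool, ha]
  have hindicator (b : ι → Bool) :
      evalBool a (∏ i, if b i then X i else 1 - X i) = if a = b then 1 else 0 := by
    simp only [evalBool, map_prod] at hfactor ⊢
    simp [hfactor, Finset.prod_boole, funext_iff]
  simp only [evalBool] at hindicator ⊢
  simp only [interp, map_sum, map_mul, eval_C, hindicator, mul_ite, mul_one, mul_zero,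
    Finset.sum_ite_eq, Finset.mem_univ, if_true]

lemma comp {κ : Type} [Fintype ι] {h : (ι → Bool) → Bool} {g : ι → (κ → Bool) → Bool}
    (hh : HasProbPoly h ε d) (hg : ∀ i, HasProbPoly (g i) δ e) :
    HasProbPoly (fun x ↦ h fun i ↦ g i x) (ε + Fintype.card ι * δ) (d * e) := by
  obtain ⟨k, μ, P, _, hPdeg, hPerr⟩ := hh.exists_measure
  choose l ν Q hν hQdeg hQerr using fun i ↦ (hg i).exists_measure
  refine hasProbPoly_of_measure (μ.prod (.pi ν))
    (fun ω : Fin k × ∀ i, Fin (l i) ↦ bind₁ (fun i ↦ Q i (ω.2 i)) (P ω.1))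
    (fun ω ↦ (totalDegree_bind₁_le (fun i ↦ hQdeg i _) _).trans
      (Nat.mul_le_mul_right _ (hPdeg _))) fun x ↦ ?_
  let A : Set (Fin k) :=
    {ω | evalBool (fun i ↦ g i x) (P ω) ≠ if h fun i ↦ g i x then 1 else 0}
  let B (i : ι) : Set (Fin (l i)) := {ω | evalBool x (Q i ω) ≠ if g i x then 1 else 0}
  have hsub : {ω : Fin k × ∀ i, Fin (l i) | evalBool x (bind₁ (fun i ↦ Q i (ω.2 i)) (P ω.1)) ≠
      if h fun i ↦ g i x then 1 else 0} ⊆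
        Prod.fst ⁻¹' A ∪ ⋃ i, (fun ω ↦ ω.2 i) ⁻¹' B i := by
    intro ω hω
    by_contra! hgood
    simp only [A, B, Set.mem_union, Set.mem_iUnion, Set.mem_preimage, Set.mem_ofPred_eq, not_or,
      not_exists, ne_eq, not_not] at hgood
    exact hω ((evalBool_bind₁ hgood.2 _).trans hgood.1)
  have hA : (μ.prod (.pi ν)).real (Prod.fst ⁻¹' A) ≤ ε := by
    rw [measurePreserving_fst.measureReal_preimage A.toFinite.measurableSet.nullMeasurableSet]
    exact hPerr _
  have hB (i : ι) : (μ.prod (.pi ν)).real ((fun ω ↦ ω.2 i) ⁻¹' B i) ≤ δ := by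
    have hmp : MeasurePreserving (fun ω : Fin k × ∀ i, Fin (l i) ↦ ω.2 i) (μ.prod (.pi ν)) (ν i) :=
      (measurePreserving_eval ν i).comp measurePreserving_snd
    rw [hmp.measureReal_preimage (B i).toFinite.measurableSet.nullMeasurableSet]
    exact hQerr i x
  calc _ ≤ (μ.prod (.pi ν)).real (Prod.fst ⁻¹' A ∪ ⋃ i, (fun ω ↦ ω.2 i) ⁻¹' B i) :=
        measureReal_mono hsub
    _ ≤ (μ.prod (.pi ν)).real (Prod.fst ⁻¹' A) +
          ∑ i, (μ.prod (.pi ν)).real ((fun ω ↦ ω.2 i) ⁻¹' B i) :=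
        (measureReal_union_le ..).trans
          (add_le_add_right (measureReal_iUnion_fintype_le _) _)
    _ ≤ ε + ∑ _ : ι, δ := by gcongr with i; exact hB i
    _ = ε + Fintype.card ι * δ := by simp

lemma mixture {Θ : Type} [Finite Θ] [MeasurableSpace Θ] [DiscreteMeasurableSpace Θ]
    (ν : Measure Θ) [IsProbabilityMeasure ν] {g : Θ → (ι → Bool) → Bool}
    (hg : ∀ θ, HasProbPoly (g θ) ε d) (hf : ∀ a, ν.real {θ | g θ a ≠ f a} ≤ δ) :
    HasProbPoly f (δ + ε) d := by
  have := Fintype.ofFinite Θ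
  have hε : 0 ≤ ε := (hg ν.nonempty_of_neZero.some).nonneg
  choose k μ P hμ hPdeg hPerr using fun θ ↦ (hg θ).exists_measure
  refine hasProbPoly_of_measure (ν.prod (.pi μ))
    (fun ω : Θ × ∀ θ, Fin (k θ) ↦ P ω.1 (ω.2 ω.1)) (fun ω ↦ hPdeg ..) fun a ↦ ?_
  let A : Set Θ := {θ | g θ a ≠ f a}
  let B (θ : Θ) : Set (Fin (k θ)) := {i | evalBool a (P θ i) ≠ if g θ a then 1 else 0}
  have hsub : {ω : Θ × ∀ θ, Fin (k θ) | evalBool a (P ω.1 (ω.2 ω.1)) ≠ if f a then 1 else 0} ⊆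
      Prod.fst ⁻¹' A ∪ {ω | ω.2 ω.1 ∈ B ω.1} := by
    intro ω hω
    by_contra! hgood
    simp only [A, B, Set.mem_union, Set.mem_preimage, Set.mem_ofPred_eq, not_or, ne_eq,
      not_not] at hgood
    exact hω (by rw [hgood.2, hgood.1])
  have hA : (ν.prod (.pi μ)).real (Prod.fst ⁻¹' A) ≤ δ := by
    rw [measurePreserving_fst.measureReal_preimage A.toFinite.measurableSet.nullMeasurableSet]
    exact hf a
  have hB : (ν.prod (.pi μ)).real {ω | ω.2 ω.1 ∈ B ω.1} ≤ ε := by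
    refine measureReal_prod_le_of_forall_section_le (Set.toFinite _).measurableSet hε fun θ ↦ ?_
    exact ((measurePreserving_eval μ θ).measureReal_preimage
      (B θ).toFinite.measurableSet.nullMeasurableSet).trans_le (hPerr θ a)
  calc _ ≤ (ν.prod (.pi μ)).real (Prod.fst ⁻¹' A ∪ {ω | ω.2 ω.1 ∈ B ω.1}) := measureReal_mono hsub
    _ ≤ _ := measureReal_union_le ..
    _ ≤ δ + ε := add_le_add hA hB

lemma amplify (h : HasProbPoly f ε d) (hε : ε ≤ 1 / 2) (m : ℕ) :
    HasProbPoly f (Real.exp (-2 * m * (1 / 2 - ε) ^ 2)) (m * d) := by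
  obtain ⟨k, μ, P, _, hPdeg, hPerr⟩ := h.exists_measure
  refine hasProbPoly_of_measure (.pi fun _ : Fin m ↦ μ) (fun ω ↦ majority fun j ↦ P (ω j))
    (fun ω ↦ (totalDegree_majority_le fun j ↦ hPdeg (ω j)).trans_eq (by rw [Fintype.card_fin]))
    fun a ↦ ?_
  set A : Set (Fin k) := {i | evalBool a (P i) ≠ if f a then 1 else 0} with hA
  have hsub : {ω : Fin m → Fin k | evalBool a (majority fun j ↦ P (ω j)) ≠ if f a then 1 else 0} ⊆
      {ω | Fintype.card (Fin m) * (1 / 2 : ℝ) ≤ (#{j | ω j ∈ A} : ℝ)} := by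
    intro ω hω
    by_contra hfew
    have hfew' : 2 * #{j | ω j ∈ A} < Fintype.card (Fin m) := by
      rw [Set.mem_ofPred_eq, not_le] at hfew
      exact_mod_cast (by linarith : 2 * (#{j | ω j ∈ A} : ℝ) < Fintype.card (Fin m))
    have hmany : Fintype.card (Fin m) <
        2 * #{j | evalBool a (P (ω j)) = if f a then 1 else 0} := by
      have := Finset.card_filter_add_card_filter_not (s := Finset.univ) fun j ↦ ω j ∈ A
      simp only [hA, Set.mem_ofPred_eq, not_not, Finset.card_univ, ne_eq] at this hfew'
      omega
    refine hω ?_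
    rw [evalBool, map_majority]
    cases hfa : f a
    · simpa [hfa] using majority_eq_zero (by simpa [hfa] using! hmany)
    · simpa [hfa] using majority_eq_one (by simpa [hfa] using! hmany)
  calc _ ≤ (Measure.pi fun _ : Fin m ↦ μ).real
          {ω | Fintype.card (Fin m) * (1 / 2 : ℝ) ≤ (#{j | ω j ∈ A} : ℝ)} := measureReal_mono hsub
    _ ≤ Real.exp (-2 * Fintype.card (Fin m) * (1 / 2 - μ.real A) ^ 2) :=
        measureReal_pi_card_mem_ge_le μ A.toFinite.measurableSet ((hPerr a).trans hε)
    _ ≤ Real.exp (-2 * m * (1 / 2 - ε) ^ 2) := by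
        have hμA : μ.real A ≤ ε := hPerr a
        rw [Fintype.card_fin, Real.exp_le_exp]
        simp only [neg_mul, neg_le_neg_iff]
        gcongr

end HasProbPoly

lemma hasProbPoly_pdeg [Finite ι] (f : (ι → Bool) → Bool) (hε : 0 ≤ ε) :
    HasProbPoly f ε (pdeg ε f) :=
  let ⟨d, hd⟩ := HasProbPoly.exists_zero_error f
  Nat.sInf_mem (s := {d | HasProbPoly f ε d}) ⟨d, hd.mono hε le_rfl⟩

lemma HasProbPoly.pdeg_le (h : HasProbPoly f ε d) : pdeg ε f ≤ d :=
  Nat.sInf_le h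

end HasProbPoly

/-- The disjunction of a family of bits; it is `ORf n` for the index type `Fin n`. -/
noncomputable def anyTrue {ι : Type*} (x : ι → Bool) : Bool :=
  decide (∃ i, x i = true)

lemma anyTrue_eq_true {ι : Type*} {x : ι → Bool} : anyTrue x = true ↔ ∃ i, x i = true :=
  decide_eq_true_iff

lemma anyTrue_false {ι : Type*} : anyTrue (fun _ : ι ↦ false) = false := by
  simp [anyTrue]

lemma eq_false_or_exists_eq_true {ι : Type*} (x : ι → Bool) :
    x = (fun _ ↦ false) ∨ ∃ i, x i = true := by
  simpa [funext_iff] using em (∀ i, x i = false)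

/-- The polynomial `1 - ∏ q, (1 - ∑ i ∈ T q, x i)`: it computes the disjunction of the `x i` at
every `x` that is either zero or has exactly one nonzero coordinate in some `T q`. -/
noncomputable def isolationPoly {ι κ : Type} [Fintype ι] [Fintype κ] (T : κ → Set ι) :
    MvPolynomial ι ℝ :=
  1 - ∏ q, (1 - ∑ i with i ∈ T q, X i)

section isolationPoly

variable {ι κ : Type} [Fintype ι] [Fintype κ]

lemma evalBool_isolationPoly (T : κ → Set ι) (a : ι → Bool) :
    evalBool a (isolationPoly T) = 1 - ∏ q, (1 - ((T q ∩ {i | a i = true}).ncard : ℝ)) := by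
  have hncard (q : κ) : (T q ∩ {i | a i = true}).ncard = #{i | i ∈ T q ∧ a i = true} := by
    rw [← Set.ncard_coe_finset, Finset.coe_filter_univ]
    rfl
  simp [evalBool, isolationPoly, hncard, Finset.filter_filter]

lemma totalDegree_isolationPoly_le (T : κ → Set ι) :
    (isolationPoly T).totalDegree ≤ Fintype.card κ :=
  calc (isolationPoly T).totalDegree
      ≤ ∑ q, (1 - ∑ i with i ∈ T q, X i : MvPolynomial ι ℝ).totalDegree :=
        (totalDegree_one_sub_le _).trans (totalDegree_finsetProd ..)
    _ ≤ ∑ _ : κ, 1 := by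
        gcongr with q
        exact (totalDegree_one_sub_le _).trans
          (totalDegree_finsetSum_le fun i _ ↦ (totalDegree_X i).le)
    _ = Fintype.card κ := by simp

end isolationPoly

/-- The bits of `x` with index in `T`, all other bits being cleared. -/
noncomputable def mask {ι : Type*} (T : Set ι) (x : ι → Bool) : ι → Bool :=
  fun i ↦ x i && decide (i ∈ T)

lemma mask_false {ι : Type*} (T : Set ι) : mask T (fun _ ↦ false) = fun _ ↦ false := rfl

lemma mask_eq_single {ι : Type*} {T : Set ι} {x : ι → Bool} {j : ι}
    (h : T ∩ {i | x i = true} = {j}) : mask T x = fun i ↦ decide (i = j) := by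
  funext i
  have hi : i ∈ T ∧ x i = true ↔ i = j := Set.ext_iff.1 h i
  simp [mask, ← hi, and_comm]

lemma HasProbPoly.comp_mask {ι : Type} [Finite ι] {f : (ι → Bool) → Bool} {ε : ℝ} {d : ℕ}
    (h : HasProbPoly f ε d) (T : Set ι) : HasProbPoly (fun x ↦ f (mask T x)) ε d := by
  have := Fintype.ofFinite ι
  have hmask (i : ι) : HasProbPoly (fun x ↦ mask T x i) 0 1 := by
    by_cases hi : i ∈ T
    · simpa [mask, hi] using apply_xor_const i false
    · simpa [mask, hi] using (const false).mono le_rfl zero_le_one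
  simpa using h.comp hmask

section anyTrue

variable {ι : Type} [Fintype ι] {f : (ι → Bool) → Bool} {δ : ℝ} {d : ℕ}

lemma hasProbPoly_anyTrue (r : ℕ) :
    HasProbPoly (anyTrue : (ι → Bool) → Bool) ((13 / 16) ^ r)
      (Fintype.card (DyadicIndex ι r)) := by
  refine hasProbPoly_of_measure (dyadicMeasure ι r) isolationPoly totalDegree_isolationPoly_le
    fun a ↦ ?_
  obtain rfl | ha := eq_false_or_exists_eq_true a
  · have hpow : (0 : ℝ) ≤ (13 / 16) ^ r := by positivity
    simpa [evalBool_isolationPoly, anyTrue_false] using hpow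
  · refine (dyadicMeasure_real_forall_ncard_inter_ne_one_le r (W := {i | a i = true}) ha).trans'
      (measureReal_mono fun T hT q hq ↦ hT ?_)
    rw [evalBool_isolationPoly, Finset.prod_eq_zero (Finset.mem_univ q) (by simp [hq]), sub_zero,
      if_pos (anyTrue_eq_true.2 ha)]

lemma HasProbPoly.anyTrue_of_single (hf : HasProbPoly f δ d) (hfalse : f (fun _ ↦ false) = false)
    (hsingle : ∀ j, f (fun i ↦ decide (i = j)) = true) (r : ℕ) :
    HasProbPoly (anyTrue : (ι → Bool) → Bool)
      ((13 / 16) ^ r + ((13 / 16) ^ r + Fintype.card (DyadicIndex ι r) * δ))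
      (Fintype.card (DyadicIndex (DyadicIndex ι r) r) * d) := by
  refine mixture (dyadicMeasure ι r) (g := fun T x ↦ anyTrue fun q ↦ f (mask (T q) x))
    (fun T ↦ (hasProbPoly_anyTrue r).comp fun q ↦ hf.comp_mask (T q)) fun x ↦ ?_
  obtain rfl | hx := eq_false_or_exists_eq_true x
  · have hpow : (0 : ℝ) ≤ (13 / 16) ^ r := by positivity
    simpa only [mask_false, hfalse, anyTrue_false, ne_eq, not_true_eq_false, Set.ofPred_false,
      measureReal_empty] using hpow
  · refine (dyadicMeasure_real_forall_ncard_inter_ne_one_le r (W := {i | x i = true}) hx).trans'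
      (measureReal_mono fun T hT q hq ↦ hT ?_)
    obtain ⟨j, hj⟩ := Set.ncard_eq_one.1 hq
    have hq_true : f (mask (T q) x) = true := by rw [mask_eq_single hj, hsingle]
    rw [anyTrue_eq_true.2 hx, anyTrue_eq_true.2 ⟨q, hq_true⟩]

end anyTrue

/-- The function `f` read off along the coordinates `e j`, starting at the point `a`: `z` selects
the coordinates of `a` to flip, and the output bit says whether the value of `f` changes. -/
noncomputable def flipRestriction {ι κ : Type*} (f : (ι → Bool) → Bool) (a : ι → Bool) (e : κ → ι)
    (z : κ → Bool) : Bool :=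
  f (fun i ↦ Function.extend e z (fun _ ↦ false) i ^^ a i) ^^ f a

section flipRestriction

variable {ι κ : Type} {f : (ι → Bool) → Bool} {e : κ → ι} {a : ι → Bool}

lemma flipRestriction_false : flipRestriction f a e (fun _ ↦ false) = false := by
  have hextend : Function.extend e (fun _ ↦ false) (fun _ ↦ false) = fun _ ↦ false :=
    Function.extend_const e false
  simp [flipRestriction, hextend]

lemma flipRestriction_single [DecidableEq ι] (he : e.Injective) {j : κ}
    (hj : f (Function.update a (e j) !(a (e j))) ≠ f a) :
    flipRestriction f a e (fun k ↦ decide (k = j)) = true := by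
  have hupdate : (fun i ↦ Function.extend e (fun k ↦ decide (k = j)) (fun _ ↦ false) i ^^ a i) =
      Function.update a (e j) !(a (e j)) := by
    funext i
    by_cases hi : ∃ k, e k = i
    · obtain ⟨k, rfl⟩ := hi
      rw [he.extend_apply]
      by_cases hk : k = j
      · simp [hk]
      · simp [hk, he.ne hk]
    · rw [Function.extend_apply' _ _ _ hi, Function.update_of_ne fun h ↦ hi ⟨j, h.symm⟩,
        Bool.false_xor]
  simpa [flipRestriction, hupdate] using hj

lemma HasProbPoly.flipRestriction [Finite ι] {ε : ℝ} {d : ℕ} (h : HasProbPoly f ε d)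
    (he : e.Injective) (a : ι → Bool) : HasProbPoly (flipRestriction f a e) ε d := by
  have := Fintype.ofFinite ι
  have hcoord (i : ι) : HasProbPoly
      (fun z : κ → Bool ↦ Function.extend e z (fun _ ↦ false) i ^^ a i) 0 1 := by
    by_cases hi : ∃ k, e k = i
    · obtain ⟨k, rfl⟩ := hi
      simpa only [he.extend_apply] using apply_xor_const k _
    · simpa only [Function.extend_apply' _ _ _ hi] using (const _).mono le_rfl zero_le_one
  simpa using! (apply_xor_const () (f a)).comp fun _ ↦ h.comp hcoord

end flipRestriction

lemma exists_injective_sensitivity {n : ℕ} (f : (Fin n → Bool) → Bool) :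
    ∃ (a : Fin n → Bool) (e : Fin (sensitivity f) → Fin n), e.Injective ∧
      ∀ j, f (Function.update a (e j) !(a (e j))) ≠ f a := by
  obtain ⟨a, -, ha⟩ := Finset.exists_mem_eq_sup Finset.univ Finset.univ_nonempty
    fun a : Fin n → Bool ↦ #{i | f (Function.update a i !(a i)) ≠ f a}
  refine ⟨a, Finset.orderEmbOfFin _ ha.symm, (Finset.orderEmbOfFin _ ha.symm).injective,
    fun j ↦ ?_⟩
  exact (Finset.mem_filter.1 (Finset.orderEmbOfFin_mem _ ha.symm j)).2

lemma ORf_eq_anyTrue (n : ℕ) : ORf n = anyTrue := by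
  funext x
  simp [ORf, anyTrue]

lemma mul_exp_neg_clog_two_le_one (n : ℕ) : n * Real.exp (-Nat.clog 2 n) ≤ 1 := by
  rw [Real.exp_neg, ← div_eq_mul_inv, div_le_one (Real.exp_pos _)]
  calc (n : ℝ) ≤ 2 ^ Nat.clog 2 n := mod_cast Nat.le_pow_clog Nat.one_lt_two n
    _ ≤ Real.exp 1 ^ Nat.clog 2 n := by
        gcongr
        linarith [Real.add_one_le_exp 1]
    _ = Real.exp (Nat.clog 2 n) := by rw [← Real.exp_nat_mul, mul_one]

/-- The exponent `M` such that error `exp (-M)` in each of the `11 * (⌊log₂ s⌋ + 1)` restrictions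
used for `OR_s` makes their total error at most `1 / 9`; it is of order `log log s`. -/
def errorExponent (s : ℕ) : ℕ :=
  Nat.clog 2 (9 * (11 * (Nat.log 2 s + 1)))

lemma errorExponent_le {s : ℕ} (hs : 16 ≤ s) :
    (errorExponent s : ℝ) ≤ 5 * Real.logb 2 (Real.logb 2 s) := by
  have hlog : 4 ≤ Real.logb 2 s := by
    rw [Real.le_logb_iff_rpow_le one_lt_two (by positivity)]
    rw [show (2 : ℝ) ^ (4 : ℝ) = 16 by norm_num]
    exact_mod_cast hs
  have hloglog : 2 ≤ Real.logb 2 (Real.logb 2 s) := by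
    rw [Real.le_logb_iff_rpow_le one_lt_two (by positivity)]
    rwa [show (2 : ℝ) ^ (2 : ℝ) = 4 by norm_num]
  have harg : ((9 * (11 * (Nat.log 2 s + 1)) : ℕ) : ℝ) ≤ 2 ^ 7 * Real.logb 2 s := by
    have := Real.natLog_le_logb s 2
    push_cast at this ⊢
    linarith
  calc (errorExponent s : ℝ) = ⌈Real.logb 2 (9 * (11 * (Nat.log 2 s + 1)) : ℕ)⌉₊ :=
        congrArg Nat.cast (Real.natCeil_logb_natCast 2 _).symm
    _ ≤ Real.logb 2 (9 * (11 * (Nat.log 2 s + 1)) : ℕ) + 1 :=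
        (Nat.ceil_lt_add_one (Real.logb_nonneg one_lt_two (by norm_cast; omega))).le
    _ ≤ Real.logb 2 (2 ^ 7 * Real.logb 2 s) + 1 := by
        gcongr
        exact one_lt_two
    _ = 8 + Real.logb 2 (Real.logb 2 s) := by
        rw [Real.logb_mul (by positivity) (by positivity), Real.logb_pow,
          Real.logb_self_eq_one one_lt_two]
        ring
    _ ≤ 5 * Real.logb 2 (Real.logb 2 s) := by linarith

lemma HasProbPoly.anyTrue_of_single_third {ι : Type} [Fintype ι] {f : (ι → Bool) → Bool} {d : ℕ}
    (hf : HasProbPoly f (1 / 3) d)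
    (hfalse : f (fun _ ↦ false) = false) (hsingle : ∀ j, f (fun i ↦ decide (i = j)) = true) :
    HasProbPoly (anyTrue : (ι → Bool) → Bool) (1 / 3)
      (198 * errorExponent (Fintype.card ι) ^ 2 * d) := by
  set M := errorExponent (Fintype.card ι) with hM
  set N := Fintype.card (DyadicIndex ι 11) with hN
  have hMN : M = Nat.clog 2 (9 * N) := by simp [hM, hN, errorExponent]
  -- The factor `18` makes the exponent `-2 * 18 * (1 / 2 - 1 / 3) ^ 2` equal to `-1`.
  have hamplified := hf.amplify (by norm_num) (18 * M)
  refine (hamplified.anyTrue_of_single hfalse hsingle 11).mono ?_ ?_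
  · have hexp : Real.exp (-2 * (18 * M : ℕ) * (1 / 2 - 1 / 3) ^ 2) = Real.exp (-M) := by
      congr 1
      push_cast
      ring
    have hunion : (9 * N : ℕ) * Real.exp (-M) ≤ 1 := hMN ▸ mul_exp_neg_clog_two_le_one _
    push_cast at hunion
    rw [hexp]
    linarith [show (13 / 16 : ℝ) ^ 11 ≤ 1 / 9 by norm_num]
  · have hlog : Nat.log 2 N + 1 ≤ M := by
      have hNpos : 0 < N := by simp [hN]
      rw [hMN, Nat.succ_le_iff, ← Nat.pow_lt_pow_iff_right Nat.one_lt_two]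
      calc 2 ^ Nat.log 2 N ≤ N := Nat.pow_log_le_self 2 hNpos.ne'
        _ < 9 * N := by omega
        _ ≤ 2 ^ Nat.clog 2 (9 * N) := Nat.le_pow_clog Nat.one_lt_two _
    calc Fintype.card (DyadicIndex (DyadicIndex ι 11) 11) * (18 * M * d)
        = 11 * (Nat.log 2 N + 1) * (18 * M * d) := by simp [hN]
      _ ≤ 11 * M * (18 * M * d) := by gcongr
      _ = 198 * M ^ 2 * d := by ring

theorem high_sensitivity_lower_bound :
    ∃ C : ℝ, 0 < C ∧ ∀ (n : ℕ) (f : (Fin n → Bool) → Bool),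
      16 ≤ sensitivity f →
        (pdeg (1/3) (ORf (sensitivity f)) : ℝ) ≤
          C * (pdeg (1/3) f : ℝ) *
            (Real.logb 2 (Real.logb 2 (sensitivity f))) ^ 2 := by
  refine ⟨4950, by norm_num, fun n f hs ↦ ?_⟩
  obtain ⟨a, e, he, hflip⟩ := exists_injective_sensitivity f
  have hrestriction := (hasProbPoly_pdeg f (by norm_num : (0 : ℝ) ≤ 1 / 3)).flipRestriction he a
  have hOR := hrestriction.anyTrue_of_single_third flipRestriction_false
    fun j ↦ flipRestriction_single he (hflip j)
  rw [Fintype.card_fin] at hOR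
  calc (pdeg (1 / 3) (ORf (sensitivity f)) : ℝ)
      ≤ (198 * errorExponent (sensitivity f) ^ 2 * pdeg (1 / 3) f : ℕ) := by
        rw [ORf_eq_anyTrue]
        exact_mod_cast hOR.pdeg_le
    _ = 198 * (errorExponent (sensitivity f) : ℝ) ^ 2 * pdeg (1 / 3) f := by push_cast; rfl
    _ ≤ 198 * (5 * Real.logb 2 (Real.logb 2 (sensitivity f))) ^ 2 * pdeg (1 / 3) f := by
        gcongr
        exact errorExponent_le hs
    _ = 4950 * pdeg (1 / 3) f * Real.logb 2 (Real.logb 2 (sensitivity f)) ^ 2 := by ring
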